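/- arXiv:math/0701431 — 3 statements merged into one kernel-verified Lean document; each statement's English description precedes it below -/
import Mathlib

section
/- Let Γ be a group and Γ₀ ≤ Γ a subgroup of index two. Then a subgroup H ≤ Γ is separable in Γ if and only if H ∩ Γ₀ is separable in Γ₀. -/
/-- A subgroup `H` of a group `G` is separable in `G` if for every `g ∈ G` with `g ∉ H`
there exists a finite-index subgroup `K` of `G` with `H ≤ K` and `g ∉ K`. -/
def SeparableSubgroup {G : Type*} [Group G] (H : Subgroup G) : Prop :=
  ∀ g : G, g ∉ H → ∃ K : Subgroup G, K.FiniteIndex ∧ H ≤ K ∧ g ∉ K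

theorem separable_iff_separable_in_index_two {Γ : Type*} [Group Γ]
    (Γ₀ : Subgroup Γ) (hΓ₀ : Γ₀.index = 2) (H : Subgroup Γ) :
    SeparableSubgroup H ↔ SeparableSubgroup ((H ⊓ Γ₀).subgroupOf Γ₀) := by
  have hfin : Γ₀.FiniteIndex := ⟨by omega⟩
  constructor
  · intro hH g hg
    have hg' : (g : Γ) ∉ H := fun h => hg (by
      rw [Subgroup.mem_subgroupOf]
      exact ⟨h, g.2⟩)
    obtain ⟨K, hK, hHK, hgK⟩ := hH g hg'
    refine ⟨K.subgroupOf Γ₀, inferInstance, ?_, ?_⟩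
    · intro x hx
      rw [Subgroup.mem_subgroupOf] at hx ⊢
      exact hHK hx.1
    · rwa [Subgroup.mem_subgroupOf]
  · intro hL
    -- the intersection is separable in the whole group
    have hsep : ∀ g : Γ, g ∉ H ⊓ Γ₀ →
        ∃ K : Subgroup Γ, K.FiniteIndex ∧ H ⊓ Γ₀ ≤ K ∧ g ∉ K := by
      intro g hg
      by_cases hg0 : g ∈ Γ₀
      · obtain ⟨K, hK, hLK, hgK⟩ := hL ⟨g, hg0⟩ (by
          rw [Subgroup.mem_subgroupOf]
          exact hg)
        refine ⟨K.map Γ₀.subtype, ⟨?_⟩, ?_, ?_⟩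
        · rw [Subgroup.index_map_subtype]
          exact mul_ne_zero hK.index_ne_zero hfin.index_ne_zero
        · intro x hx
          exact ⟨⟨x, hx.2⟩, hLK (by
            rw [Subgroup.mem_subgroupOf]
            exact hx), rfl⟩
        · rintro ⟨y, hy, hyg⟩
          apply hgK
          have : y = ⟨g, hg0⟩ := Subtype.ext hyg
          exact this ▸ hy
      · exact ⟨Γ₀, hfin, inf_le_right, hg0⟩
    -- a representative of the other coset of the intersection in `H`
    obtain ⟨t, htH, ht⟩ : ∃ t ∈ H, ∀ h ∈ H, h ∈ Γ₀ ∨ h * t⁻¹ ∈ Γ₀ := by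
      by_cases hle : H ≤ Γ₀
      · exact ⟨1, H.one_mem, fun h hh => Or.inl (hle hh)⟩
      · obtain ⟨t, htH, ht0⟩ := SetLike.not_le_iff_exists.mp hle
        refine ⟨t, htH, fun h _ => ?_⟩
        by_cases h0 : h ∈ Γ₀
        · exact Or.inl h0
        · right
          rw [Subgroup.mul_mem_iff_of_index_two hΓ₀, inv_mem_iff]
          exact iff_of_false h0 ht0
    intro g hg
    obtain ⟨K₁, hK₁, hL₁, hg₁⟩ := hsep g (fun h => hg h.1)
    obtain ⟨K₂, hK₂, hL₂, hg₂⟩ := hsep (g * t⁻¹) (fun h => hg (by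
      simpa using H.mul_mem h.1 htH))
    have hN₁ : (K₁ ⊓ K₂).normalCore ≤ K₁ := (Subgroup.normalCore_le _).trans inf_le_left
    have hN₂ : (K₁ ⊓ K₂).normalCore ≤ K₂ := (Subgroup.normalCore_le _).trans inf_le_right
    refine ⟨H ⊔ (K₁ ⊓ K₂).normalCore, Subgroup.finiteIndex_of_le le_sup_right, le_sup_left, ?_⟩
    intro hmem
    obtain ⟨h, hh, n, hn, rfl⟩ := Subgroup.mem_sup_of_normal_right.mp hmem
    rcases ht h hh with h0 | h0
    · exact hg₁ (K₁.mul_mem (hL₁ ⟨hh, h0⟩) (hN₁ hn))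
    · apply hg₂
      have hconj := hN₂ ((Subgroup.normalCore_normal (K₁ ⊓ K₂)).conj_mem n hn t)
      have := K₂.mul_mem (hL₂ ⟨H.mul_mem hh (H.inv_mem htH), h0⟩) hconj
      simpa [mul_assoc] using this
end

section
/- Let G be a residually finite group and let A ≤ G be a maximal abelian subgroup, i.e., A is commutative and is not properly contained in any commutative subgroup of G. Then A is a separable subgroup of G. -/
/-- A group `G` is residually finite if every nontrivial element survives in some
finite quotient. -/
def ResiduallyFinite (G : Type*) [Group G] : Prop :=
  ∀ g : G, g ≠ 1 → ∃ (Q : Type) (_ : Group Q) (_ : Finite Q) (φ : G →* Q), φ g ≠ 1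

theorem maximal_abelian_separable {G : Type*} [Group G] (hG : ResiduallyFinite G)
    (A : Subgroup G)
    (hcomm : ∀ a ∈ A, ∀ b ∈ A, a * b = b * a)
    (hmax : ∀ B : Subgroup G, (∀ a ∈ B, ∀ b ∈ B, a * b = b * a) → A ≤ B → A = B) :
    SeparableSubgroup A := by
  intro g hg
  obtain ⟨a, haA, hag⟩ : ∃ a ∈ A, a * g ≠ g * a := by
    by_contra! h
    apply hg
    have key : ∀ x ∈ (A : Set G) ∪ {g}, ∀ y ∈ (A : Set G) ∪ {g}, x * y = y * x := by
      rintro x (hx | rfl) y (hy | rfl)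
      · exact hcomm x hx y hy
      · exact h x hx
      · exact (h y hy).symm
      · rfl
    have hB := hmax (Subgroup.closure ((A : Set G) ∪ {g})) (by
      have h1 : Subgroup.closure ((A : Set G) ∪ {g}) ≤
          Subgroup.centralizer ((A : Set G) ∪ {g}) := by
        rw [Subgroup.closure_le]
        intro x hx
        rw [SetLike.mem_coe, Subgroup.mem_centralizer_iff]
        intro y hy
        exact key y hy x hx
      intro x hx y hy
      have h2 : Subgroup.closure ((A : Set G) ∪ {g}) ≤ Subgroup.centralizer {x} := by
        rw [Subgroup.closure_le]
        intro z hz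
        rw [SetLike.mem_coe, Subgroup.mem_centralizer_singleton_iff]
        exact (Subgroup.mem_centralizer_iff.1 (h1 hx) z hz)
      exact (Subgroup.mem_centralizer_singleton_iff.1 (h2 hy)).symm)
      (fun x hx => Subgroup.subset_closure (Or.inl hx))
    rw [hB]
    exact Subgroup.subset_closure (Or.inr rfl)
  have hne : a * g * (g * a)⁻¹ ≠ 1 := fun h => hag (mul_inv_eq_one.1 h)
  obtain ⟨Q, _, _, φ, hφ⟩ := hG _ hne
  refine ⟨(Subgroup.centralizer {φ a}).comap φ, ?_, ?_, ?_⟩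
  · exact @Subgroup.finiteIndex_of_le _ _ _ _ (Subgroup.finiteIndex_ker φ) (Subgroup.ker_le_comap φ _)
  · intro b hb
    rw [Subgroup.mem_comap, Subgroup.mem_centralizer_singleton_iff, ← map_mul, ← map_mul,
      hcomm a haA b hb]
  · intro h
    rw [Subgroup.mem_comap, Subgroup.mem_centralizer_singleton_iff, ← map_mul, ← map_mul] at h
    apply hφ
    rw [map_mul, map_inv, h, mul_inv_cancel]
end

section
/- Let Γ be a group acting on a set X and let D be a finite set of ordered pairs (v, w) of points of X such that for each (v, w) ∈ D one has v ≠ w and the stabilizer Stab_Γ(v) = {γ ∈ Γ : γ•v = v} is separable in Γ. Then there exists a finite-index normal subgroup N ⊴ Γ such that for every (v, w) ∈ D, every γ ∈ Γ, and every δ ∈ N, one has δ•(γ•v) ≠ γ•w. -/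
theorem exists_normal_finiteIndex_no_returning_diagonals
    {Γ X : Type*} [Group Γ] [MulAction Γ X] (D : Finset (X × X))
    (hne : ∀ p ∈ D, p.1 ≠ p.2)
    (hsep : ∀ p ∈ D, SeparableSubgroup (MulAction.stabilizer Γ p.1)) :
    ∃ N : Subgroup Γ, N.Normal ∧ N.FiniteIndex ∧
      ∀ p ∈ D, ∀ γ : Γ, ∀ δ ∈ N, δ • (γ • p.1) ≠ γ • p.2 := by
  have key : ∀ p ∈ D, ∃ N : Subgroup Γ, N.Normal ∧ N.FiniteIndex ∧
      ∀ γ : Γ, ∀ δ ∈ N, δ • (γ • p.1) ≠ γ • p.2 := by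
    intro p hp
    by_cases h : ∃ g : Γ, g • p.1 = p.2
    · obtain ⟨g, hg⟩ := h
      have hgs : g ∉ MulAction.stabilizer Γ p.1 := by
        intro hs
        exact hne p hp ((MulAction.mem_stabilizer_iff.mp hs).symm.trans hg)
      obtain ⟨K, hK, hle, hgK⟩ := hsep p hp g hgs
      refine ⟨K.normalCore, inferInstance, inferInstance, ?_⟩
      intro γ δ hδ heq
      have hn : γ⁻¹ * δ * γ ∈ K := by
        have := hδ γ⁻¹
        simpa using this
      have hs : (γ⁻¹ * δ * γ)⁻¹ * g ∈ K := by
        apply hle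
        rw [MulAction.mem_stabilizer_iff, mul_smul, inv_smul_eq_iff, hg, mul_smul, mul_smul,
          heq, inv_smul_smul]
      apply hgK
      have := K.mul_mem hn hs
      rwa [mul_inv_cancel_left] at this
    · refine ⟨⊤, inferInstance, inferInstance, ?_⟩
      intro γ δ _ heq
      apply h
      refine ⟨γ⁻¹ * δ * γ, ?_⟩
      rw [mul_smul, mul_smul, heq, inv_smul_smul]
  choose! N hN hF hP using key
  refine ⟨⨅ p : D, N p.1, ?_, ?_, ?_⟩
  · exact Subgroup.normal_iInf_normal fun p => hN p.1 p.2
  · exact Subgroup.finiteIndex_iInf fun p => hF p.1 p.2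
  · intro p hp γ δ hδ
    exact hP p hp γ δ (Subgroup.mem_iInf.mp hδ ⟨p, hp⟩)
end
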